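/- arXiv:1506.08961 — 2 statements merged into one kernel-verified Lean document; each statement's English description precedes it below -/
import Mathlib

section
/- Let H(q,q^{h−1}) be a normalized generalized Hadamard matrix over 𝔽_q, with q > 2 and h ≥ 1, and set r = rank(C_H) and k = ker(C_H). Then: (i) if k = 1, then h+2 ≤ r ≤ ⌊q^h/2⌋; (ii) if 2 ≤ k ≤ h, then h+2 ≤ r ≤ k + q^{h+1−k} − 1; (iii) if k = h+1, then r = h+1. -/
open Finset

/-- `H` is a generalized Hadamard matrix with parameter `lam`: for every pair of
distinct rows, the multiset of coordinatewise differences contains every element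
of `F` exactly `lam` times. -/
def IsGH {F : Type*} [Fintype F] [DecidableEq F] [Sub F]
    {ι : Type*} [Fintype ι] (lam : ℕ) (H : Matrix ι ι F) : Prop :=
  ∀ i j : ι, i ≠ j → ∀ a : F,
    (Finset.univ.filter (fun s => H i s - H j s = a)).card = lam

/-- A matrix is normalized if its first row and first column are all zeros. -/
def Normalized {F : Type*} [Zero F] {n : ℕ} (H : Matrix (Fin n) (Fin n) F) : Prop :=
  ∀ i s : Fin n, (i.val = 0 ∨ s.val = 0) → H i s = 0

/-- The code `F_H` whose codewords are the rows of `H`. -/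
def rowSet {F ι : Type*} (H : Matrix ι ι F) : Set (ι → F) :=
  Set.range (fun i => H i)

/-- The GH code `C_H = ⋃_{α ∈ F} (F_H + α·𝟏)`. -/
def ghCode {F ι : Type*} [Add F] (H : Matrix ι ι F) : Set (ι → F) :=
  {v | ∃ (α : F) (i : ι), v = fun s => H i s + α}

/-- The rank of a code: the dimension of its linear span. -/
noncomputable def rankC {F ι : Type*} [Field F] (C : Set (ι → F)) : ℕ :=
  Module.finrank F (Submodule.span F C)

/-- The kernel `K(C) = {x : αx + C = C for all α}` of a code. -/
def kerSet {F ι : Type*} [Mul F] [Add F] (C : Set (ι → F)) : Set (ι → F) :=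
  {x | ∀ α : F, (fun c => (fun i => α * x i) + c) '' C = C}

/-- The dimension of the kernel of a code. -/
noncomputable def kerDim {F ι : Type*} [Field F] (C : Set (ι → F)) : ℕ :=
  Module.finrank F (Submodule.span F (kerSet C))

/-- The `p`-kernel `K_p(C) = {x : x + C = C}` of a code. -/
def pKerSet {F ι : Type*} [Add F] (C : Set (ι → F)) : Set (ι → F) :=
  {x | (fun c => x + c) '' C = C}

/-- The Euclidean orthogonal code `C^⊥`. -/
def dualSet {F ι : Type*} [CommRing F] [Fintype ι] (C : Set (ι → F)) : Set (ι → F) :=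
  {v | ∀ w ∈ C, ∑ i, v i * w i = 0}

/-- Two matrices are translation equivalent if the rows of one are obtained from the
rows of the other by adding a fixed vector. -/
def TransEquiv {F ι : Type*} [Add F] (B B' : Matrix ι ι F) : Prop :=
  ∃ v : ι → F, rowSet B' = (fun b => v + b) '' rowSet B

/-- The Kronecker sum `H₁ ⊕ H₂`. -/
def kroneckerSum {F ι κ : Type*} [Add F] (H₁ : Matrix ι ι F) (H₂ : Matrix κ κ F) :
    Matrix (ι × κ) (ι × κ) F :=
  fun p r => H₁ p.1 r.1 + H₂ p.2 r.2

/-- The Kronecker sum `H₁ ⊕ [B₁, …, Bₙ]`, whose `(i,j)` block is `h_{ij} + B_i`. -/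
def kroneckerSumFam {F ι κ : Type*} [Add F] (H₁ : Matrix ι ι F) (B : ι → Matrix κ κ F) :
    Matrix (ι × κ) (ι × κ) F :=
  fun p r => H₁ p.1 r.1 + B p.1 p.2 r.2

/-- The multiplicative-table matrix `S_q` of a field. -/
def mulTable (F : Type*) [Mul F] : Matrix F F F := fun i j => i * j

/-- A code is `K`-additive, for a subfield `K`, if it is a linear space over `K`. -/
def IsAdditiveOver {F ι : Type*} [Field F] (K : Subfield F) (C : Set (ι → F)) : Prop :=
  (0 : ι → F) ∈ C ∧ (∀ x ∈ C, ∀ y ∈ C, x + y ∈ C) ∧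
    ∀ (a : K), ∀ x ∈ C, (fun i => (a : F) * x i) ∈ C

/-!
By the polarization identity `∑ uᵢvᵢ = e₂(u - v) - e₂(u) - e₂(v) + e₁(u)e₁(v)` for elementary
symmetric functions, and because `e₁` and `e₂` of a vector that takes every value of `𝔽_q` equally
often vanish (the values are the roots of a power of `X ^ q - X`), the GH code is self-orthogonal,
unless `q = 3` and `3 ∤ λ`; hence `r ≤ n / 2`. In the exceptional case `n = q = 3` all codewords are
still orthogonal to `𝟏`, so `r ≤ 2`, which the lower bound excludes.

The remaining bounds hold for every code `C` of size `q ^ m` containing `0`: there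
`K(C) ⊆ C ⊆ ⟨C⟩`, so `k ≤ m ≤ r`, and equality on either side makes `C` linear. Moreover `C` is a
union of `q ^ (m - k)` cosets of `K(C)`, one of them `K(C)` itself, so `⟨C⟩` is spanned by `K(C)`
together with `q ^ (m - k) - 1` further vectors.
-/

section SecondSymmetricFunction

variable {R κ : Type*}

theorem esymm_two_zero [CommSemiring R] : (0 : Multiset R).esymm 2 = 0 := by
  rw [Multiset.esymm, Multiset.powersetCard_zero_right, Multiset.map_zero, Multiset.sum_zero]

theorem esymm_two_cons [CommSemiring R] (a : R) (s : Multiset R) :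
    (a ::ₘ s).esymm 2 = s.esymm 2 + a * s.sum := by
  have hpairs : (s.map fun x => a * x).sum = a * s.sum := by
    rw [Multiset.sum_map_mul_left, Multiset.map_id']
  rw [Multiset.esymm, Multiset.powersetCard_cons, Multiset.powersetCard_one, Multiset.map_add,
    Multiset.sum_add, Multiset.map_map, Multiset.map_map, ← hpairs]
  simp only [Function.comp_def, Multiset.prod_cons, Multiset.prod_singleton]
  rfl

theorem esymm_two_add [CommSemiring R] (s t : Multiset R) :
    (s + t).esymm 2 = s.esymm 2 + t.esymm 2 + s.sum * t.sum := by
  induction s using Multiset.induction_on with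
  | empty => simp [esymm_two_zero]
  | cons a s ih =>
    simp only [Multiset.cons_add, esymm_two_cons, ih, Multiset.sum_add, Multiset.sum_cons]
    ring

theorem esymm_two_nsmul_of_sum_eq_zero [CommSemiring R] {s : Multiset R} (hs : s.sum = 0) (n : ℕ) :
    (n • s).esymm 2 = n * s.esymm 2 := by
  induction n with
  | zero => simp [esymm_two_zero]
  | succ n ih =>
    rw [succ_nsmul, esymm_two_add, ih, hs]
    push_cast
    ring

theorem esymm_two_map_sub [CommRing R] (s : Multiset κ) (u v : κ → R) :
    (s.map fun i => u i - v i).esymm 2 =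
      (s.map u).esymm 2 + (s.map v).esymm 2 - (s.map u).sum * (s.map v).sum +
        (s.map fun i => u i * v i).sum := by
  induction s using Multiset.induction_on with
  | empty => simp [esymm_two_zero]
  | cons a s ih =>
    simp only [Multiset.map_cons, esymm_two_cons, Multiset.sum_cons, Multiset.sum_map_sub, ih]
    ring

end SecondSymmetricFunction

section Equidistributed

theorem sum_univ_val_eq_zero {F : Type*} [Field F] [Fintype F] (hq : 2 < Fintype.card F) :
    (univ : Finset F).val.sum = 0 := by
  simpa only [sum_val, id, pow_one] using FiniteField.sum_pow_lt_card_sub_one F 1 (by omega)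

open Polynomial in
theorem esymm_univ_eq_zero {F : Type*} [Field F] [Fintype F] {j : ℕ} (hj : 0 < j)
    (hjq : j + 1 < Fintype.card F) : (univ : Finset F).val.esymm j = 0 := by
  have hdeg : (X ^ Fintype.card F - X : F[X]).natDegree = Fintype.card F :=
    FiniteField.X_pow_card_sub_X_natDegree_eq F Fintype.one_lt_card
  have hroots := FiniteField.roots_X_pow_card_sub_X F
  have hlead : (X ^ Fintype.card F - X : F[X]).leadingCoeff ≠ 0 :=
    leadingCoeff_ne_zero.2 (FiniteField.X_pow_card_sub_X_ne_zero F Fintype.one_lt_card)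
  have hvieta := coeff_eq_esymm_roots_of_card (p := (X ^ Fintype.card F - X : F[X]))
    (k := Fintype.card F - j) (by rw [hroots, hdeg]; rfl) (by omega)
  rw [hdeg, hroots, Nat.sub_sub_self (by omega), coeff_sub, coeff_X_pow, coeff_X,
    if_neg (by omega), if_neg (by omega), sub_zero] at hvieta
  exact (mul_eq_zero.1 hvieta.symm).resolve_left
    (mul_ne_zero hlead (pow_ne_zero _ (neg_ne_zero.2 one_ne_zero)))

variable {F ι : Type*} [Fintype F] [Fintype ι]

/-- The vector `w` takes every value of `F` exactly `lam` times, expressed as an equality of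
multisets; this is the property of differences of rows that defines a GH matrix. -/
def IsEquidistributed (lam : ℕ) (w : ι → F) : Prop :=
  univ.val.map w = lam • (univ : Finset F).val

theorem isEquidistributed_iff_card_filter_eq [DecidableEq F] {lam : ℕ} {w : ι → F} :
    IsEquidistributed lam w ↔ ∀ a : F, #{s | w s = a} = lam := by
  rw [IsEquidistributed, Multiset.ext]
  refine forall_congr' fun a => ?_
  rw [Multiset.count_nsmul, Multiset.count_univ, mul_one, Multiset.count_map]
  simp only [card_def, filter_val, eq_comm (a := a)]

theorem IsEquidistributed.surjective {lam : ℕ} {w : ι → F} (hw : IsEquidistributed lam w)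
    (hlam : lam ≠ 0) : Function.Surjective w := fun a => by
  have ha : a ∈ lam • (univ : Finset F).val := Multiset.mem_nsmul.2 ⟨hlam, mem_univ a⟩
  rw [← hw] at ha
  obtain ⟨s, -, hs⟩ := Multiset.mem_map.1 ha
  exact ⟨s, hs⟩

variable [Field F]

theorem IsEquidistributed.sum_eq_zero {lam : ℕ} {w : ι → F} (hw : IsEquidistributed lam w)
    (hq : 2 < Fintype.card F) : ∑ s, w s = 0 := by
  rw [sum_eq_multiset_sum, hw, Multiset.sum_nsmul, sum_univ_val_eq_zero hq, smul_zero]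

theorem IsEquidistributed.esymm_two_eq_zero {lam : ℕ} {w : ι → F} (hw : IsEquidistributed lam w)
    (hq : 2 < Fintype.card F) (hlam : (lam : F) = 0 ∨ 3 < Fintype.card F) :
    (univ.val.map w).esymm 2 = 0 := by
  rw [hw, esymm_two_nsmul_of_sum_eq_zero (sum_univ_val_eq_zero hq)]
  rcases hlam with hlam | hq3
  · rw [hlam, zero_mul]
  · rw [esymm_univ_eq_zero two_pos hq3, mul_zero]

end Equidistributed

section Dual

variable {F ι : Type*} [Field F] [Fintype ι]

theorem nondegenerate_dotProductBilin :
    LinearMap.BilinForm.Nondegenerate (dotProductBilin F F : LinearMap.BilinForm F (ι → F)) :=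
  ⟨fun x hx => dotProduct_eq_zero x hx, fun y hy => dotProduct_eq_zero y fun x => by
    rw [dotProduct_comm]
    exact hy x⟩

theorem span_dualSet (C : Set (ι → F)) :
    Submodule.span F (dualSet C) =
      LinearMap.BilinForm.orthogonal (dotProductBilin F F) (Submodule.span F C) := by
  have horth : dualSet C =
      (LinearMap.BilinForm.orthogonal (dotProductBilin F F) (Submodule.span F C) :
        Set (ι → F)) := by
    ext v
    refine ⟨fun hv w hw => ?_, fun hv w hw => ?_⟩
    · change w ⬝ᵥ v = 0
      induction hw using Submodule.span_induction with
      | mem w hw => exact (dotProduct_comm w v).trans (hv w hw)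
      | zero => exact zero_dotProduct v
      | add x y _ _ hx hy => rw [add_dotProduct, hx, hy, add_zero]
      | smul a x _ hx => rw [smul_dotProduct, hx, smul_zero]
    · exact (dotProduct_comm v w).trans (hv w (Submodule.subset_span hw))
  rw [horth, Submodule.span_eq]

theorem rankC_add_rankC_dualSet (C : Set (ι → F)) :
    rankC C + rankC (dualSet C) = Fintype.card ι := by
  have h := LinearMap.BilinForm.finrank_orthogonal nondegenerate_dotProductBilin
    (Submodule.span F C)
  have hle := Submodule.finrank_le (Submodule.span F C)
  rw [Module.finrank_fintype_fun_eq_card] at h hle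
  rw [rankC, rankC, span_dualSet, h, Nat.add_sub_cancel' hle]

theorem two_mul_rankC_le_card_of_subset_dualSet {C : Set (ι → F)} (hC : C ⊆ dualSet C) :
    2 * rankC C ≤ Fintype.card ι := by
  have hle : rankC C ≤ rankC (dualSet C) := Submodule.finrank_mono (Submodule.span_mono hC)
  have := rankC_add_rankC_dualSet C
  omega

theorem rankC_lt_card_of_mem_dualSet {C : Set (ι → F)} {v : ι → F} (hv : v ∈ dualSet C)
    (hv0 : v ≠ 0) : rankC C < Fintype.card ι := by
  have hpos : 0 < rankC (dualSet C) :=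
    Module.finrank_pos_iff_exists_ne_zero.2
      ⟨⟨v, Submodule.subset_span hv⟩, fun h => hv0 (congrArg Subtype.val h)⟩
  have := rankC_add_rankC_dualSet C
  omega

end Dual

section Kernel

variable {F ι : Type*} [Field F] {C : Set (ι → F)}

theorem mem_kerSet_iff {x : ι → F} : x ∈ kerSet C ↔ ∀ α : F, ∀ c ∈ C, α • x + c ∈ C := by
  refine ⟨fun h α c hc => (h α).subset ⟨c, hc, rfl⟩, fun h α => Set.Subset.antisymm ?_ ?_⟩
  · rintro _ ⟨c, hc, rfl⟩
    exact h α c hc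
  · exact fun c hc => ⟨(-α) • x + c, h _ c hc, by ext i; simp⟩

variable (C) in
/-- The kernel `K(C)` of a code as a subspace, so that quotients by it and dimensions make sense
without taking the span of `kerSet C`. -/
def kerSubmodule : Submodule F (ι → F) where
  carrier := kerSet C
  zero_mem' := mem_kerSet_iff.2 fun α c hc => by rwa [smul_zero, zero_add]
  add_mem' hx hy := mem_kerSet_iff.2 fun α c hc => by
    rw [smul_add, add_assoc]
    exact mem_kerSet_iff.1 hx _ _ (mem_kerSet_iff.1 hy _ _ hc)
  smul_mem' a x hx := mem_kerSet_iff.2 fun α c hc => by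
    rw [smul_smul]
    exact mem_kerSet_iff.1 hx _ _ hc

variable (C) in
theorem kerDim_eq_finrank : kerDim C = Module.finrank F (kerSubmodule C) := by
  rw [kerDim, ← Submodule.span_eq (kerSubmodule C)]
  rfl

theorem kerSet_subset (h0 : 0 ∈ C) : kerSet C ⊆ C := fun x hx => by
  simpa using mem_kerSet_iff.1 hx 1 0 h0

theorem kerSet_coe_submodule (U : Submodule F (ι → F)) : kerSet (U : Set (ι → F)) = U :=
  (kerSet_subset U.zero_mem).antisymm fun _ hx =>
    mem_kerSet_iff.2 fun α _ hc => U.add_mem (U.smul_mem α hx) hc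

open Pointwise in
variable (C) in
theorem add_kerSubmodule : C + (kerSubmodule C : Set (ι → F)) = C := by
  refine Set.Subset.antisymm ?_ fun c hc => ⟨c, hc, 0, (kerSubmodule C).zero_mem, add_zero c⟩
  rintro _ ⟨c, hc, x, hx, rfl⟩
  simpa [add_comm] using mem_kerSet_iff.1 hx 1 c hc

theorem finrank_map_mkQ_add_finrank {V : Type*} [AddCommGroup V] [Module F V]
    [FiniteDimensional F V] {K U : Submodule F V} (hKU : K ≤ U) :
    Module.finrank F (U.map K.mkQ) + Module.finrank F K = Module.finrank F U := by
  rw [← (K.mkQ.domRestrict U).finrank_range_add_finrank_ker, LinearMap.range_domRestrict,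
    LinearMap.ker_domRestrict, Submodule.ker_mkQ,
    ← (Submodule.submoduleOfEquivOfLe hKU).finrank_eq, Submodule.submoduleOf]

variable [Finite ι]

theorem rankC_le_kerDim_add_ncard_image_mkQ [Finite F] (h0 : 0 ∈ C) :
    rankC C ≤ kerDim C + (((kerSubmodule C).mkQ '' C).ncard - 1) := by
  have hle : kerSubmodule C ≤ Submodule.span F C :=
    fun x hx => Submodule.subset_span (kerSet_subset h0 hx)
  have hzero : 0 ∈ (kerSubmodule C).mkQ '' C := ⟨0, h0, map_zero _⟩
  have hspan : Module.finrank F ((Submodule.span F C).map (kerSubmodule C).mkQ) ≤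
      ((kerSubmodule C).mkQ '' C).ncard - 1 := by
    have := Fintype.ofFinite ↑((kerSubmodule C).mkQ '' C \ {0})
    rw [Submodule.map_span, ← Submodule.span_sdiff_singleton_zero,
      ← Set.ncard_sdiff_singleton_of_mem hzero, Set.ncard_eq_toFinset_card']
    exact finrank_span_le_card _
  rw [rankC, ← finrank_map_mkQ_add_finrank hle, kerDim_eq_finrank]
  omega

variable [Fintype F]

theorem ncard_submodule (U : Submodule F (ι → F)) :
    (U : Set (ι → F)).ncard = Fintype.card F ^ Module.finrank F U := by
  rw [← Nat.card_coe_set_eq, ← Nat.card_eq_fintype_card]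
  exact Module.natCard_eq_pow_finrank

variable (C) in
theorem ncard_eq_card_pow_kerDim_mul :
    C.ncard = Fintype.card F ^ kerDim C * ((kerSubmodule C).mkQ '' C).ncard := by
  have h := (kerSubmodule C).toAddSubgroup.card_add_eq_card_addSubgroup_add_card_quotient C
  rw [kerDim_eq_finrank, ← ncard_submodule, ← Nat.card_coe_set_eq, ← Nat.card_coe_set_eq,
    ← Nat.card_coe_set_eq]
  conv_lhs => rw [← add_kerSubmodule C]
  exact h

variable {m : ℕ}

theorem kerDim_le_of_ncard_eq (h0 : 0 ∈ C) (hC : C.ncard = Fintype.card F ^ m) : kerDim C ≤ m := by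
  have h : (kerSubmodule C : Set (ι → F)).ncard ≤ C.ncard := Set.ncard_le_ncard (kerSet_subset h0)
  rw [hC, ncard_submodule, ← kerDim_eq_finrank] at h
  exact (Nat.pow_le_pow_iff_right Fintype.one_lt_card).1 h

theorem le_rankC_of_ncard_eq (hC : C.ncard = Fintype.card F ^ m) : m ≤ rankC C := by
  have h := Set.ncard_le_ncard (Submodule.subset_span (R := F) (s := C)) (Set.toFinite _)
  rw [hC, ncard_submodule] at h
  exact (Nat.pow_le_pow_iff_right Fintype.one_lt_card).1 h

theorem kerDim_eq_iff_rankC_eq (h0 : 0 ∈ C) (hC : C.ncard = Fintype.card F ^ m) :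
    kerDim C = m ↔ rankC C = m := by
  constructor <;> intro h
  · have hker : (kerSubmodule C : Set (ι → F)) = C :=
      Set.eq_of_subset_of_ncard_le (kerSet_subset h0)
        (by rw [ncard_submodule, hC, ← kerDim_eq_finrank, h])
    rwa [rankC, ← hker, Submodule.span_eq, ← kerDim_eq_finrank]
  · have hspan : C = Submodule.span F C :=
      Set.eq_of_subset_of_ncard_le Submodule.subset_span
        (by rw [ncard_submodule, hC, ← rankC, h]) (Set.toFinite _)
    rwa [kerDim, hspan, kerSet_coe_submodule, ← hspan]

theorem lt_rankC_of_kerDim_lt (h0 : 0 ∈ C) (hC : C.ncard = Fintype.card F ^ m)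
    (hk : kerDim C < m) : m < rankC C :=
  (le_rankC_of_ncard_eq hC).lt_of_ne' fun hr => hk.ne ((kerDim_eq_iff_rankC_eq h0 hC).2 hr)

theorem rankC_le_kerDim_add_card_pow (h0 : 0 ∈ C) (hC : C.ncard = Fintype.card F ^ m) :
    rankC C ≤ kerDim C + Fintype.card F ^ (m - kerDim C) - 1 := by
  have hq : 0 < Fintype.card F := Fintype.card_pos
  have hcosets : ((kerSubmodule C).mkQ '' C).ncard = Fintype.card F ^ (m - kerDim C) := by
    refine Nat.eq_of_mul_eq_mul_left (pow_pos hq (kerDim C)) ?_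
    rw [← ncard_eq_card_pow_kerDim_mul, hC, ← pow_add,
      Nat.add_sub_cancel' (kerDim_le_of_ncard_eq h0 hC)]
  have hpos : 0 < Fintype.card F ^ (m - kerDim C) := pow_pos hq _
  have := rankC_le_kerDim_add_ncard_image_mkQ h0
  omega

end Kernel

section GHCode

variable {F ι : Type*} [Field F] {H : Matrix ι ι F}

theorem zero_mem_ghCode (h0 : 0 ∈ rowSet H) : 0 ∈ ghCode H := by
  obtain ⟨i, hi⟩ := h0
  exact ⟨0, i, by rw [← hi]; simp⟩

variable [Fintype F] [DecidableEq F] [Fintype ι] {lam : ℕ}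

theorem IsGH.isEquidistributed_sub (hGH : IsGH lam H) {i j : ι} (hij : i ≠ j) :
    IsEquidistributed lam fun s => H i s - H j s :=
  isEquidistributed_iff_card_filter_eq.2 (hGH i j hij)

theorem IsGH.ncard_ghCode (hGH : IsGH lam H) (hlam : lam ≠ 0) :
    (ghCode H).ncard = Fintype.card F * Fintype.card ι := by
  have hrange : ghCode H = Set.range fun p : F × ι => fun s => H p.2 s + p.1 := by
    ext v
    simp [ghCode, eq_comm]
  rw [hrange, Set.ncard_range_of_injective, Nat.card_eq_fintype_card, Fintype.card_prod]
  rintro ⟨α, i⟩ ⟨β, j⟩ h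
  have hs : ∀ s, H i s + α = H j s + β := congrFun h
  have hij : i = j := by
    by_contra hij
    obtain ⟨s, hval⟩ := (hGH.isEquidistributed_sub hij).surjective hlam (β - α + 1)
    exact one_ne_zero (α := F) (by linear_combination hs s - hval)
  subst hij
  obtain ⟨s⟩ : Nonempty ι := ⟨i⟩
  exact Prod.ext (add_left_cancel (hs s)) rfl

theorem IsGH.sum_row_eq_zero (hGH : IsGH lam H) (h0 : 0 ∈ rowSet H) (hq : 2 < Fintype.card F)
    (i : ι) : ∑ s, H i s = 0 := by
  obtain ⟨i₀, hi₀⟩ := h0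
  rcases eq_or_ne i i₀ with rfl | hi
  · exact sum_eq_zero fun s _ => congrFun hi₀ s
  · simpa only [congrFun hi₀, Pi.zero_apply, sub_zero] using
      (hGH.isEquidistributed_sub hi).sum_eq_zero hq

theorem IsGH.esymm_two_row_sub_eq_zero (hGH : IsGH lam H) (hq : 2 < Fintype.card F)
    (hlam : (lam : F) = 0 ∨ 3 < Fintype.card F) (i j : ι) :
    (univ.val.map fun s => H i s - H j s).esymm 2 = 0 := by
  rcases eq_or_ne i j with rfl | hij
  · simp only [sub_self, Multiset.map_const', ← Multiset.nsmul_singleton]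
    rw [esymm_two_nsmul_of_sum_eq_zero (Multiset.sum_singleton 0), ← Multiset.cons_zero,
      esymm_two_cons, esymm_two_zero, zero_mul, add_zero, mul_zero]
  · exact (hGH.isEquidistributed_sub hij).esymm_two_eq_zero hq hlam

theorem IsGH.sum_row_mul_row_eq_zero (hGH : IsGH lam H) (h0 : 0 ∈ rowSet H)
    (hq : 2 < Fintype.card F) (hlam : (lam : F) = 0 ∨ 3 < Fintype.card F) (i j : ι) :
    ∑ s, H i s * H j s = 0 := by
  have hrow : ∀ k, (univ.val.map (H k)).esymm 2 = 0 := fun k => by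
    obtain ⟨i₀, hi₀⟩ := h0
    simpa only [congrFun hi₀, Pi.zero_apply, sub_zero] using
      hGH.esymm_two_row_sub_eq_zero hq hlam k i₀
  have hpolar := esymm_two_map_sub univ.val (H i) (H j)
  rw [hGH.esymm_two_row_sub_eq_zero hq hlam, hrow, hrow, ← sum_eq_multiset_sum,
    ← sum_eq_multiset_sum, ← sum_eq_multiset_sum, hGH.sum_row_eq_zero h0 hq] at hpolar
  linear_combination -hpolar

theorem IsGH.one_mem_dualSet_ghCode (hGH : IsGH lam H) (h0 : 0 ∈ rowSet H)
    (hq : 2 < Fintype.card F) (hι : (Fintype.card ι : F) = 0) : 1 ∈ dualSet (ghCode H) := by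
  rintro _ ⟨α, i, rfl⟩
  simp [sum_add_distrib, hGH.sum_row_eq_zero h0 hq, hι]

theorem IsGH.ghCode_subset_dualSet (hGH : IsGH lam H) (h0 : 0 ∈ rowSet H)
    (hq : 2 < Fintype.card F) (hlam : (lam : F) = 0 ∨ 3 < Fintype.card F)
    (hι : (Fintype.card ι : F) = 0) : ghCode H ⊆ dualSet (ghCode H) := by
  rintro _ ⟨α, i, rfl⟩ _ ⟨β, j, rfl⟩
  simp [add_mul, mul_add, sum_add_distrib, ← sum_mul, ← mul_sum, hι,
    hGH.sum_row_eq_zero h0 hq, hGH.sum_row_mul_row_eq_zero h0 hq hlam]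

end GHCode

theorem stmt17_general {h : ℕ} {F ι : Type*} [Field F] [Fintype F] [DecidableEq F] [Fintype ι]
    (hq : 2 < Fintype.card F) (hh : 1 ≤ h) (hι : Fintype.card ι = Fintype.card F ^ h)
    {H : Matrix ι ι F} (hGH : IsGH (Fintype.card F ^ (h - 1)) H) (h0 : 0 ∈ rowSet H) :
    (kerDim (ghCode H) ≤ h →
      h + 2 ≤ rankC (ghCode H) ∧ rankC (ghCode H) ≤ Fintype.card F ^ h / 2 ∧
      rankC (ghCode H) ≤
        kerDim (ghCode H) + Fintype.card F ^ (h + 1 - kerDim (ghCode H)) - 1) ∧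
    (kerDim (ghCode H) = h + 1 → rankC (ghCode H) = h + 1) := by
  set q := Fintype.card F
  have hC0 : 0 ∈ ghCode H := zero_mem_ghCode h0
  have hC : (ghCode H).ncard = q ^ (h + 1) := by
    rw [hGH.ncard_ghCode (pow_ne_zero _ (by omega)), hι, pow_succ']
  refine ⟨fun hk => ?_, (kerDim_eq_iff_rankC_eq hC0 hC).1⟩
  have hlow : h + 1 < rankC (ghCode H) := lt_rankC_of_kerDim_lt hC0 hC (by omega)
  refine ⟨hlow, (Nat.le_div_iff_mul_le two_pos).2 ?_, rankC_le_kerDim_add_card_pow hC0 hC⟩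
  have hn : (Fintype.card ι : F) = 0 := by
    rw [hι, Nat.cast_pow, FiniteField.cast_card_eq_zero, zero_pow (by omega)]
  rw [mul_comm, ← hι]
  by_cases hexc : h = 1 ∧ q = 3
  · obtain ⟨rfl, hq3⟩ := hexc
    have : Nonempty ι := Fintype.card_pos_iff.1 (hι ▸ pow_pos (by omega) 1)
    have hlt := rankC_lt_card_of_mem_dualSet (hGH.one_mem_dualSet_ghCode h0 hq hn) one_ne_zero
    rw [hι, hq3, pow_one] at hlt
    omega
  · have hlam : ((q ^ (h - 1) : ℕ) : F) = 0 ∨ 3 < q := by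
      refine (show 1 < h ∨ 3 < q by omega).imp_left fun h1 => ?_
      rw [Nat.cast_pow, FiniteField.cast_card_eq_zero, zero_pow (by omega)]
    exact two_mul_rankC_le_card_of_subset_dualSet (hGH.ghCode_subset_dualSet h0 hq hlam hn)

theorem stmt17 {q h : ℕ} {F : Type*} [Field F] [Fintype F] [DecidableEq F]
    (hcard : Fintype.card F = q) (hq : 2 < q) (hh : 1 ≤ h)
    (H : Matrix (Fin (q ^ h)) (Fin (q ^ h)) F)
    (hGH : IsGH (q ^ (h - 1)) H) (hnorm : Normalized H) :
    (kerDim (ghCode H) = 1 →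
      h + 2 ≤ rankC (ghCode H) ∧ rankC (ghCode H) ≤ q ^ h / 2) ∧
    (2 ≤ kerDim (ghCode H) → kerDim (ghCode H) ≤ h →
      h + 2 ≤ rankC (ghCode H) ∧
      rankC (ghCode H) ≤ kerDim (ghCode H) + q ^ (h + 1 - kerDim (ghCode H)) - 1) ∧
    (kerDim (ghCode H) = h + 1 → rankC (ghCode H) = h + 1) := by
  subst hcard
  obtain ⟨hle, hlinear⟩ := stmt17_general hq hh (Fintype.card_fin _) hGH
    ⟨⟨0, pow_pos Fintype.card_pos h⟩, funext fun s => hnorm _ s (.inl rfl)⟩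
  exact ⟨fun hk => ⟨(hle (hk.trans_le hh)).1, (hle (hk.trans_le hh)).2.1⟩,
    fun _ hk => ⟨(hle hk).1, (hle hk).2.2⟩, hlinear⟩
end

section
/- For q > 2 and any h ≥ 2 such that ⌈(h+2)/2⌉ ≤ k ≤ h, there exists a GH code C_H of length n = q^h over 𝔽_q with ker(C_H) = k and rank(C_H) = r if and only if r ∈ {h+2, …, k + q^{h+1−k} − 1}. -/
open Finset

/-!
A code `C` of size `q ^ d` with kernel `K` of dimension `k` is a union of `q ^ (d - k)` cosets of
`K`, one of them `K` itself, so its span is generated by `K` and `q ^ (d - k) - 1` further vectors;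
and if its rank is at most `d` then `C` is linear, so that `k = d`. A GH code of length `q ^ h` has
size `q ^ (h + 1)`.

Conversely, write `k = a + 1` and `h = m + a`. The matrix with entries `u · x + v · y + g u y`,
rows `(u, v)` and columns `(x, y)`, is GH for every `g`. Take functions `g u` vanishing at `0` and
at the basis vectors, which meet the affine functions of `y` only in `0`. The code is then the
direct sum of the affine functions of `y`, of dimension `a + 1`, and of the graph of `g`. Let `g` be
supported on a set `T` of `s` vectors avoiding `0` and the basis vectors, with linearly independent
values on `T`; this leaves room for every `s ≤ q ^ m - (m + 1)`, as `m ≤ a`. Then the graph spans a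
space of dimension `m + s`, and for `q > 2` its kernel is trivial.
-/

section LinearAlgebra

variable {F V W : Type*} [Field F] [AddCommGroup V] [Module F V] [AddCommGroup W] [Module F W]

lemma finrank_map_add_finrank_inf_ker [FiniteDimensional F V] (S : Submodule F V)
    (f : V →ₗ[F] W) :
    Module.finrank F (S.map f) + Module.finrank F (S ⊓ LinearMap.ker f : Submodule F V) =
      Module.finrank F S := by
  rw [← (f.domRestrict S).finrank_range_add_finrank_ker, LinearMap.range_domRestrict,
    LinearMap.ker_domRestrict, ← Submodule.finrank_map_subtype_eq, Submodule.map_comap_subtype]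

lemma finrank_comap_snd [FiniteDimensional F V] [FiniteDimensional F W] (S : Submodule F W) :
    Module.finrank F (S.comap (LinearMap.snd F V W)) =
      Module.finrank F V + Module.finrank F S := by
  have hker : LinearMap.ker (LinearMap.snd F V W) ≤ S.comap (LinearMap.snd F V W) := by
    rw [← Submodule.comap_bot]
    exact Submodule.comap_mono bot_le
  rw [← finrank_map_add_finrank_inf_ker _ (LinearMap.snd F V W),
    Submodule.map_comap_eq_of_surjective Prod.snd_surjective, inf_eq_right.2 hker,
    LinearMap.ker_snd, LinearMap.finrank_range_of_inj LinearMap.inl_injective, add_comm]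

lemma finrank_span_le_ncard_sub_one {S : Set V} (hS : S.Finite) (h0 : (0 : V) ∈ S) :
    Module.finrank F (Submodule.span F S) ≤ S.ncard - 1 := by
  have := (hS.sdiff (t := {0})).fintype
  rw [← Submodule.span_sdiff_singleton_zero, ← Set.ncard_sdiff_singleton_of_mem h0,
    Set.ncard_eq_toFinset_card']
  exact finrank_span_le_card _

open Pointwise in
lemma ncard_eq_card_mul_ncard_image_mkQ {K : Submodule F V} {C : Set V}
    (hK : ∀ x ∈ K, ∀ c ∈ C, x + c ∈ C) : C.ncard = Nat.card K * (K.mkQ '' C).ncard := by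
  have hCK : C + (K.toAddSubgroup : Set V) = C := by
    refine (Set.add_subset_iff.2 fun c hc x hx => ?_).antisymm
      fun c hc => Set.mem_add.2 ⟨c, hc, 0, K.zero_mem, add_zero c⟩
    rw [add_comm]
    exact hK x hx c hc
  have h := AddSubgroup.card_add_eq_card_addSubgroup_add_card_quotient K.toAddSubgroup C
  rw [hCK, Nat.card_coe_set_eq, Nat.card_coe_set_eq] at h
  exact h

lemma finrank_span_image_eq_ncard {ι : Type*} {w : ι → V} {T : Set ι} [Finite T]
    (hw : LinearIndepOn F w T) : Module.finrank F (Submodule.span F (w '' T)) = T.ncard := by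
  have := Fintype.ofFinite T
  rw [Set.image_eq_range, finrank_span_eq_card hw, Set.fintypeCard_eq_ncard]

lemma span_range_indicator {ι : Type*} (w : ι → V) (T : Set ι) :
    Submodule.span F (Set.range (T.indicator w)) = Submodule.span F (w '' T) := by
  refine le_antisymm (Submodule.span_le.2 ?_) (Submodule.span_mono ?_)
  · rintro _ ⟨i, rfl⟩
    by_cases hi : i ∈ T
    · rw [Set.indicator_of_mem hi]
      exact Submodule.subset_span ⟨i, hi, rfl⟩
    · rw [Set.indicator_of_notMem hi]
      exact Submodule.zero_mem _
  · rintro _ ⟨i, hi, rfl⟩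
    exact ⟨i, Set.indicator_of_mem hi w⟩

lemma span_graphOn_univ {ι : Type*} (b : Module.Basis ι F V) {γ : V → W} (hγ : ∀ i, γ (b i) = 0) :
    Submodule.span F (Set.univ.graphOn γ) =
      (Submodule.span F (Set.range γ)).comap (LinearMap.snd F V W) := by
  set S := Submodule.span F (Set.univ.graphOn γ)
  have graph_mem (u : V) : (u, γ u) ∈ S := Submodule.subset_span (by simp)
  have inl_mem (u : V) : (u, 0) ∈ S := by
    have : ⊤ ≤ S.comap (LinearMap.inl F V W) := by
      rw [← b.span_eq, Submodule.span_le]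
      rintro _ ⟨i, rfl⟩
      simpa [hγ i] using graph_mem (b i)
    exact this (Submodule.mem_top (x := u))
  have inr_mem (w : W) (hw : w ∈ Submodule.span F (Set.range γ)) : (0, w) ∈ S := by
    have : Submodule.span F (Set.range γ) ≤ S.comap (LinearMap.inr F V W) := by
      rw [Submodule.span_le]
      rintro _ ⟨u, rfl⟩
      simpa using S.sub_mem (graph_mem u) (inl_mem u)
    exact this hw
  refine le_antisymm (Submodule.span_le.2 ?_) ?_
  · rintro _ ⟨u, -, rfl⟩
    exact Submodule.subset_span ⟨u, rfl⟩
  · rintro ⟨u, w⟩ hw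
    simpa using S.add_mem (inl_mem u) (inr_mem w hw)

end LinearAlgebra

section CodeKernel

variable {R V W : Type*} [Semiring R] [AddCommGroup V] [Module R V] [AddCommGroup W] [Module R W]

/-- The kernel of a code `C` in an arbitrary module, as a submodule; for `V = ι → F` its carrier
is `kerSet C`. -/
def codeKernel (R : Type*) {V : Type*} [Semiring R] [AddCommGroup V] [Module R V] (C : Set V) :
    Submodule R V where
  carrier := {x | ∀ α : R, ∀ c ∈ C, α • x + c ∈ C}
  zero_mem' α c hc := by simpa using hc
  add_mem' {x y} hx hy α c hc := by
    rw [smul_add, add_assoc]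
    exact hx α _ (hy α c hc)
  smul_mem' β x hx α c hc := by
    rw [smul_smul]
    exact hx _ c hc

lemma mem_codeKernel {C : Set V} {x : V} :
    x ∈ codeKernel R C ↔ ∀ α : R, ∀ c ∈ C, α • x + c ∈ C :=
  Iff.rfl

lemma add_mem_of_mem_codeKernel {C : Set V} {x c : V} (hx : x ∈ codeKernel R C) (hc : c ∈ C) :
    x + c ∈ C := by
  simpa using hx 1 c hc

lemma codeKernel_submodule (S : Submodule R V) : codeKernel R (S : Set V) = S := by
  refine le_antisymm (fun x hx => ?_) fun x hx α c hc => S.add_mem (S.smul_mem α hx) hc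
  simpa using add_mem_of_mem_codeKernel hx S.zero_mem

lemma codeKernel_image {f : V →ₗ[R] W} (hf : Function.Injective f) {C : Set V}
    (hC : C.Nonempty) : codeKernel R (f '' C) = (codeKernel R C).map f := by
  ext y
  constructor
  · intro hy
    obtain ⟨c₀, hc₀⟩ := hC
    obtain ⟨d, -, hd⟩ := add_mem_of_mem_codeKernel hy ⟨c₀, hc₀, rfl⟩
    obtain rfl : f (d - c₀) = y := by rw [map_sub, hd, add_sub_cancel_right]
    refine ⟨d - c₀, fun α c hc => ?_, rfl⟩
    obtain ⟨e, he, heq⟩ := hy α (f c) ⟨c, hc, rfl⟩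
    rw [← map_smul, ← map_add] at heq
    rwa [← hf heq]
  · rintro ⟨x, hx, rfl⟩ α _ ⟨c, hc, rfl⟩
    exact ⟨α • x + c, hx α c hc, by simp⟩

lemma codeKernel_preimage {f : V →ₗ[R] W} (hf : Function.Surjective f) (C : Set W) :
    codeKernel R (f ⁻¹' C) = (codeKernel R C).comap f := by
  ext x
  simp [mem_codeKernel, hf.forall]

end CodeKernel

section Bounds

variable {F V : Type*} [Field F] [AddCommGroup V] [Module F V]

lemma finrank_codeKernel_eq_of_finrank_span_le [Finite F] [FiniteDimensional F V] {C : Set V}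
    {d : ℕ} (hC : C.ncard = Nat.card F ^ d) (hd : Module.finrank F (Submodule.span F C) ≤ d) :
    Module.finrank F (codeKernel F C) = d := by
  have : Finite V := Module.finite_of_finite F
  have hq : 1 < Nat.card F := Finite.one_lt_card
  have hspan : (Submodule.span F C : Set V).ncard =
      Nat.card F ^ Module.finrank F (Submodule.span F C) := by
    rw [← Nat.card_coe_set_eq]
    exact Module.natCard_eq_pow_finrank
  have hlinear : C = Submodule.span F C := by
    refine Set.eq_of_subset_of_ncard_le Submodule.subset_span ?_
    rw [hspan, hC]
    exact Nat.pow_le_pow_right hq.le hd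
  rw [hlinear, codeKernel_submodule]
  apply Nat.pow_right_injective hq
  change Nat.card F ^ _ = Nat.card F ^ _
  rw [← hspan, ← hC, ← hlinear]

lemma finrank_span_le_finrank_codeKernel_add [Finite F] [FiniteDimensional F V] {C : Set V} {d : ℕ}
    (hC : C.ncard = Nat.card F ^ d) (h0 : (0 : V) ∈ C) :
    Module.finrank F (Submodule.span F C) ≤
      Module.finrank F (codeKernel F C) +
        (Nat.card F ^ (d - Module.finrank F (codeKernel F C)) - 1) := by
  set K := codeKernel F C
  have : Finite V := Module.finite_of_finite F
  have hcosets : Nat.card F ^ Module.finrank F K * (K.mkQ '' C).ncard = Nat.card F ^ d := by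
    rw [← hC, ncard_eq_card_mul_ncard_image_mkQ (K := K) fun x hx c => add_mem_of_mem_codeKernel hx,
      Module.natCard_eq_pow_finrank (K := F) (V := K)]
  have hKd : Module.finrank F K ≤ d :=
    (Nat.pow_dvd_pow_iff_le_right (Finite.one_lt_card (α := F))).1 (Dvd.intro _ hcosets)
  have hncard : (K.mkQ '' C).ncard = Nat.card F ^ (d - Module.finrank F K) := by
    rw [← Nat.pow_div hKd Nat.card_pos, ← hcosets,
      Nat.mul_div_cancel_left _ (pow_pos Nat.card_pos _)]
  have hquot : Module.finrank F ((Submodule.span F C).map K.mkQ) ≤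
      Nat.card F ^ (d - Module.finrank F K) - 1 := by
    rw [Submodule.map_span, ← hncard]
    exact finrank_span_le_ncard_sub_one (Set.toFinite _) ⟨0, h0, map_zero _⟩
  rw [← finrank_map_add_finrank_inf_ker _ K.mkQ, Submodule.ker_mkQ, add_comm]
  exact add_le_add (Submodule.finrank_mono inf_le_right) hquot

end Bounds

section FunctionCode

variable {F ι : Type*} [Field F]

lemma coe_codeKernel (C : Set (ι → F)) : (codeKernel F C : Set (ι → F)) = kerSet C := by
  ext x
  refine ⟨fun hx α => (Set.image_subset_iff.2 (hx α)).antisymm fun c hc => ?_,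
    fun hx α c hc => (hx α).subset ⟨c, hc, rfl⟩⟩
  exact ⟨-α • x + c, hx (-α) c hc, by ext i; simp⟩

lemma kerDim_eq_finrank_codeKernel (C : Set (ι → F)) :
    kerDim C = Module.finrank F (codeKernel F C) := by
  rw [kerDim, ← coe_codeKernel, Submodule.span_eq]

variable {V : Type*} [AddCommGroup V] [Module F V] {f : V →ₗ[F] ι → F}

lemma kerDim_image (hf : Function.Injective f) {C : Set V} (hC : C.Nonempty) :
    kerDim (f '' C) = Module.finrank F (codeKernel F C) := by
  rw [kerDim_eq_finrank_codeKernel, codeKernel_image hf hC]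
  exact (Submodule.equivMapOfInjective f hf _).finrank_eq.symm

lemma rankC_image (hf : Function.Injective f) (C : Set V) :
    rankC (f '' C) = Module.finrank F (Submodule.span F C) := by
  rw [rankC, Submodule.span_image]
  exact (Submodule.equivMapOfInjective f hf _).finrank_eq.symm

end FunctionCode

section GHCode

variable {ι κ A F : Type*} [Field F]

lemma ghCode_nonempty [Add A] [Nonempty A] [Nonempty ι] (H : Matrix ι ι A) :
    (ghCode H).Nonempty :=
  ⟨_, Classical.arbitrary A, Classical.arbitrary ι, rfl⟩

lemma IsGH.ncard_ghCode_s19 [AddCommGroup A] [Nontrivial A] [Fintype A] [DecidableEq A] [Fintype ι]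
    [Nonempty ι] {lam : ℕ} (hlam : 0 < lam) {H : Matrix ι ι A} (hH : IsGH lam H) :
    (ghCode H).ncard = Nat.card A * Nat.card ι := by
  have hrange : ghCode H = Set.range fun p : A × ι => fun s => H p.2 s + p.1 := by
    ext v
    simp [ghCode, eq_comm]
  have hinj : Function.Injective fun p : A × ι => fun s => H p.2 s + p.1 := by
    rintro ⟨α, i⟩ ⟨β, j⟩ hij
    have hdiff (s : ι) : H i s - H j s = β - α := by
      rw [sub_eq_sub_iff_add_eq_add, add_comm β]
      exact congrFun hij s
    obtain rfl : i = j := by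
      by_contra hne
      obtain ⟨a, ha⟩ := exists_ne (β - α)
      obtain ⟨s, hs⟩ := Finset.card_pos.1 (hlam.trans_eq (hH i j hne a).symm)
      exact ha ((Finset.mem_filter.1 hs).2.symm.trans (hdiff s))
    have hαβ := hdiff (Classical.arbitrary ι)
    rw [sub_self, eq_comm, sub_eq_zero] at hαβ
    rw [hαβ]
  rw [hrange, Set.ncard_range_of_injective hinj, Nat.card_prod]

lemma IsGH.ncard_ghCode_eq_pow [Fintype F] [DecidableEq F] [Fintype ι]
    {lam h : ℕ} (hlam : 0 < lam) (hι : Nat.card ι = Nat.card F ^ h) {H : Matrix ι ι F}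
    (hH : IsGH lam H) : (ghCode H).ncard = Nat.card F ^ (h + 1) := by
  have : Nonempty ι := (Nat.card_pos_iff.1 (hι ▸ pow_pos Nat.card_pos h)).1
  rw [hH.ncard_ghCode_s19 hlam, hι, pow_succ']

lemma IsGH.add_two_le_rankC [Fintype F] [DecidableEq F] [Fintype ι]
    {lam h : ℕ} (hlam : 0 < lam) (hι : Nat.card ι = Nat.card F ^ h) {H : Matrix ι ι F}
    (hH : IsGH lam H) (hker : kerDim (ghCode H) ≠ h + 1) : h + 2 ≤ rankC (ghCode H) := by
  by_contra! hlt
  rw [kerDim_eq_finrank_codeKernel] at hker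
  exact hker (finrank_codeKernel_eq_of_finrank_span_le (hH.ncard_ghCode_eq_pow hlam hι)
    (Nat.le_of_lt_succ hlt))

lemma IsGH.rankC_le [Fintype F] [DecidableEq F] [Fintype ι]
    {lam h : ℕ} (hlam : 0 < lam) (hι : Nat.card ι = Nat.card F ^ h) {H : Matrix ι ι F}
    (hH : IsGH lam H) (h0 : (0 : ι → F) ∈ ghCode H) :
    rankC (ghCode H) ≤
      kerDim (ghCode H) + Nat.card F ^ (h + 1 - kerDim (ghCode H)) - 1 := by
  rw [kerDim_eq_finrank_codeKernel, Nat.add_sub_assoc (Nat.pow_pos Nat.card_pos)]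
  exact finrank_span_le_finrank_codeKernel_add (hH.ncard_ghCode_eq_pow hlam hι) h0

lemma Normalized.zero_mem_ghCode [AddZeroClass A] {n : ℕ} [NeZero n]
    {H : Matrix (Fin n) (Fin n) A} (hH : Normalized H) : (0 : Fin n → A) ∈ ghCode H :=
  ⟨0, 0, funext fun s => by simp [hH 0 s (Or.inl rfl)]⟩

lemma IsGH.submatrix [Fintype A] [DecidableEq A] [Sub A] [Fintype ι] [Fintype κ] {lam : ℕ}
    {H : Matrix ι ι A} (hH : IsGH lam H) (e : κ ≃ ι) : IsGH lam (H.submatrix e e) := by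
  intro i j hij a
  rw [← hH (e i) (e j) (e.injective.ne hij) a]
  exact Finset.card_equiv e fun s => by rw [Finset.mem_filter_univ, Finset.mem_filter_univ]; rfl

lemma normalized_submatrix [Zero A] {n : ℕ} {H : Matrix ι ι A} {i₀ : ι}
    (hrow : ∀ s, H i₀ s = 0) (hcol : ∀ i, H i i₀ = 0) {e : Fin n → ι}
    (he : ∀ i : Fin n, i.val = 0 → e i = i₀) : Normalized (H.submatrix e e) := by
  rintro i s (hi | hs)
  · rw [Matrix.submatrix_apply, he i hi, hrow]
  · rw [Matrix.submatrix_apply, he s hs, hcol]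

lemma ghCode_submatrix (H : Matrix ι ι F) (e : κ ≃ ι) :
    ghCode (H.submatrix e e) = LinearEquiv.funCongrLeft F F e '' ghCode H := by
  ext v
  constructor
  · rintro ⟨α, i, rfl⟩
    exact ⟨_, ⟨α, e i, rfl⟩, rfl⟩
  · rintro ⟨_, ⟨α, i, rfl⟩, rfl⟩
    exact ⟨α, e.symm i, funext fun s => by simp [LinearMap.funLeft_apply]⟩

lemma kerDim_ghCode_submatrix [Nonempty ι] (H : Matrix ι ι F)
    (e : κ ≃ ι) : kerDim (ghCode (H.submatrix e e)) = kerDim (ghCode H) := by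
  rw [ghCode_submatrix, kerDim_eq_finrank_codeKernel (ghCode H)]
  exact kerDim_image (f := (LinearEquiv.funCongrLeft F F e).toLinearMap)
    (LinearEquiv.injective _) (ghCode_nonempty H)

lemma rankC_ghCode_submatrix (H : Matrix ι ι F) (e : κ ≃ ι) :
    rankC (ghCode (H.submatrix e e)) = rankC (ghCode H) := by
  rw [ghCode_submatrix]
  exact rankC_image (f := (LinearEquiv.funCongrLeft F F e).toLinearMap)
    (LinearEquiv.injective _) _

lemma exists_fin_equiv_eq [Finite ι] {n : ℕ} (hn : Nat.card ι = n) (i₀ : ι) :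
    ∃ e : Fin n ≃ ι, ∀ i : Fin n, i.val = 0 → e i = i₀ := by
  classical
  have : NeZero n := ⟨hn ▸ Nat.card_ne_zero.2 ⟨⟨i₀⟩, inferInstance⟩⟩
  let e := (Finite.equivFinOfCardEq hn).symm
  refine ⟨e.trans (Equiv.swap (e 0) i₀), fun i hi => ?_⟩
  obtain rfl : i = 0 := Fin.ext hi
  simp

lemma card_mul_card_filter_eq {G : Type*} [AddCommGroup G] [Fintype G] [AddCommGroup A]
    [DecidableEq A] {f : G → A} {τ : A → G} (hτ : ∀ g c, f (g + τ c) = f g + c) (a : A) :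
    Nat.card A * #{g | f g = a} = Nat.card G := by
  have hτ' (g : G) (c : A) : f (g - τ c) = f g - c := by
    rw [eq_sub_iff_add_eq, ← hτ, sub_add_cancel]
  let e : A × {g // f g = a} ≃ G :=
    { toFun p := p.2 + τ p.1
      invFun g := (f g - a, ⟨g - τ (f g - a), by rw [hτ', sub_sub_cancel]⟩)
      left_inv := by
        rintro ⟨c, g, rfl⟩
        simp [hτ]
      right_inv g := sub_add_cancel g _ }
  rw [← Fintype.card_subtype, ← Nat.card_eq_fintype_card, ← Nat.card_prod, Nat.card_congr e]

end GHCode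

section AffineFrame

variable {F n : Type*} [Field F] [DecidableEq n]

/-- The zero vector and the standard basis. An affine function vanishing at these points is
zero. -/
def affineFrame (F n : Type*) [Field F] [DecidableEq n] : Set (n → F) :=
  insert 0 (Set.range fun i => Pi.single i 1)

lemma zero_mem_affineFrame : (0 : n → F) ∈ affineFrame F n :=
  Set.mem_insert _ _

lemma single_mem_affineFrame (i : n) : (Pi.single i 1 : n → F) ∈ affineFrame F n :=
  Set.mem_insert_of_mem _ ⟨i, rfl⟩

lemma ncard_compl_affineFrame [Finite F] [Fintype n] :
    (affineFrame F n)ᶜ.ncard = Nat.card F ^ Fintype.card n - (Fintype.card n + 1) := by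
  have hzero : (0 : n → F) ∉ Set.range fun i : n => (Pi.single i 1 : n → F) := by simp
  have hinj : Function.Injective fun i : n => (Pi.single i 1 : n → F) :=
    (Pi.linearIndependent_single_one n F).injective
  rw [Set.ncard_compl, Nat.card_fun, Nat.card_eq_fintype_card (α := n), affineFrame,
    Set.ncard_insert_of_notMem hzero, Set.ncard_range_of_injective hinj,
    Nat.card_eq_fintype_card (α := n)]

/-- The extension by zero to all of `n → F` of a function defined off the affine frame. -/
noncomputable def extendOffFrame (F n : Type*) [Field F] [DecidableEq n] :
    (↥(affineFrame F n)ᶜ → F) →ₗ[F] ((n → F) → F) :=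
  Function.ExtendByZero.linearMap F Subtype.val

lemma extendOffFrame_of_mem (f : ↥(affineFrame F n)ᶜ → F) {y : n → F}
    (hy : y ∈ affineFrame F n) : extendOffFrame F n f y = 0 := by
  refine Function.extend_apply' _ _ _ ?_
  rintro ⟨⟨_, hy'⟩, rfl⟩
  exact hy' hy

lemma extendOffFrame_coe (f : ↥(affineFrame F n)ᶜ → F) (y : ↥(affineFrame F n)ᶜ) :
    extendOffFrame F n f y = f y :=
  Subtype.val_injective.extend_apply _ _ _

end AffineFrame

section MaioranaMcFarland

open scoped Matrix

variable {F m n : Type*} [Field F] [Fintype m] [Fintype n]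

/-- The `q`-ary Maiorana–McFarland matrix, whose row indexed by `(u, v)` lists the values of the
function `(x, y) ↦ u · x + v · y + g u y`. -/
def maioranaMcFarland (g : (m → F) → (n → F) → F) :
    Matrix ((m → F) × (n → F)) ((m → F) × (n → F)) F :=
  fun p z => p.1 ⬝ᵥ z.1 + p.2 ⬝ᵥ z.2 + g p.1 z.2

lemma exists_dotProduct_eq_one {d : n → F} (hd : d ≠ 0) : ∃ z, d ⬝ᵥ z = 1 := by
  classical
  obtain ⟨i, hi⟩ := Function.ne_iff.1 hd
  exact ⟨Pi.single i (d i)⁻¹, by rw [dotProduct_single, mul_inv_cancel₀ hi]⟩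

lemma isGH_maioranaMcFarland [Fintype F] [DecidableEq F] [DecidableEq m] [DecidableEq n]
    (g : (m → F) → (n → F) → F) {lam : ℕ}
    (hlam : Nat.card F * lam = Nat.card ((m → F) × (n → F))) :
    IsGH lam (maioranaMcFarland g) := by
  rintro ⟨u, v⟩ ⟨u', v'⟩ hne a
  suffices ∃ z, ∀ w (c : F), maioranaMcFarland g (u, v) (w + c • z) -
      maioranaMcFarland g (u', v') (w + c • z) =
        maioranaMcFarland g (u, v) w - maioranaMcFarland g (u', v') w + c by
    obtain ⟨z, hz⟩ := this
    apply Nat.eq_of_mul_eq_mul_left (Nat.card_pos (α := F))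
    rw [hlam]
    exact card_mul_card_filter_eq hz a
  simp only [maioranaMcFarland]
  by_cases huu' : u = u'
  · obtain ⟨y, hy⟩ := exists_dotProduct_eq_one (sub_ne_zero.2 fun h : v = v' =>
      hne (Prod.ext huu' h))
    rw [sub_dotProduct] at hy
    refine ⟨(0, y), fun w c => ?_⟩
    simp only [huu', Prod.fst_add, Prod.snd_add, Prod.smul_mk, smul_zero, add_zero,
      dotProduct_add, dotProduct_smul, smul_eq_mul]
    linear_combination c * hy
  · obtain ⟨x, hx⟩ := exists_dotProduct_eq_one (sub_ne_zero.2 huu')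
    rw [sub_dotProduct] at hx
    refine ⟨(x, 0), fun w c => ?_⟩
    simp only [Prod.fst_add, Prod.snd_add, Prod.smul_mk, smul_zero, add_zero,
      dotProduct_add, dotProduct_smul, smul_eq_mul]
    linear_combination c * hx

variable [DecidableEq n]

/-- Sends `((α, v), (u, f))` to the function `(x, y) ↦ α + v · y + (u · x + f y)`, where `f` is
extended by zero. Splitting off `(α, v)` exhibits a subspace of the kernel of every code
`ghCode (maioranaMcFarland g)`. -/
noncomputable def codewordMap (F m n : Type*) [Field F] [Fintype m] [Fintype n] [DecidableEq n] :
    (F × (n → F)) × ((m → F) × (↥(affineFrame F n)ᶜ → F)) →ₗ[F] ((m → F) × (n → F) → F) where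
  toFun p z := p.1.1 + p.1.2 ⬝ᵥ z.2 + (p.2.1 ⬝ᵥ z.1 + extendOffFrame F n p.2.2 z.2)
  map_add' p p' := by
    ext z
    simp only [Prod.fst_add, Prod.snd_add, add_dotProduct, map_add, Pi.add_apply]
    ring
  map_smul' c p := by
    ext z
    simp only [Prod.smul_fst, Prod.smul_snd, smul_dotProduct, map_smul, Pi.smul_apply, smul_eq_mul,
      RingHom.id_apply]
    ring

lemma codewordMap_apply (α : F) (v : n → F) (u : m → F) (f : ↥(affineFrame F n)ᶜ → F)
    (x : m → F) (y : n → F) :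
    codewordMap F m n ((α, v), (u, f)) (x, y) =
      α + v ⬝ᵥ y + (u ⬝ᵥ x + extendOffFrame F n f y) :=
  rfl

lemma codewordMap_injective : Function.Injective (codewordMap F m n) := by
  classical
  rw [injective_iff_map_eq_zero]
  rintro ⟨⟨α, v⟩, u, f⟩ h
  have eval_eq (x : m → F) (y : n → F) :
      α + v ⬝ᵥ y + (u ⬝ᵥ x + extendOffFrame F n f y) = 0 :=
    congrFun h (x, y)
  obtain rfl : α = 0 := by
    simpa [extendOffFrame_of_mem f zero_mem_affineFrame] using eval_eq 0 0
  obtain rfl : v = 0 := funext fun i => by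
    simpa [extendOffFrame_of_mem f (single_mem_affineFrame i)] using eval_eq 0 (Pi.single i 1)
  obtain rfl : u = 0 := funext fun i => by
    simpa [extendOffFrame_of_mem f zero_mem_affineFrame] using eval_eq (Pi.single i 1) 0
  obtain rfl : f = 0 := funext fun y => by
    simpa [extendOffFrame_coe] using eval_eq 0 y
  rfl

variable {γ : (m → F) → ↥(affineFrame F n)ᶜ → F}

lemma ghCode_maioranaMcFarland (γ : (m → F) → ↥(affineFrame F n)ᶜ → F) :
    ghCode (maioranaMcFarland fun u => extendOffFrame F n (γ u)) =
      codewordMap F m n '' (LinearMap.snd F (F × (n → F)) _ ⁻¹' Set.univ.graphOn γ) := by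
  ext w
  constructor
  · rintro ⟨α, ⟨u, v⟩, rfl⟩
    refine ⟨((α, v), (u, γ u)), ⟨u, trivial, rfl⟩, funext fun z => ?_⟩
    rw [codewordMap_apply, maioranaMcFarland]
    ring
  · rintro ⟨⟨⟨α, v⟩, _⟩, ⟨u, -, rfl⟩, rfl⟩
    refine ⟨α, (u, v), funext fun z => ?_⟩
    simp only
    rw [codewordMap_apply, maioranaMcFarland]
    ring

lemma kerDim_ghCode_maioranaMcFarland [Finite F]
    (γ : (m → F) → ↥(affineFrame F n)ᶜ → F) :
    kerDim (ghCode (maioranaMcFarland fun u => extendOffFrame F n (γ u))) =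
      Fintype.card n + 1 + Module.finrank F (codeKernel F (Set.univ.graphOn γ)) := by
  have hne : (LinearMap.snd F (F × (n → F)) _ ⁻¹' Set.univ.graphOn γ).Nonempty :=
    ⟨(0, (0, γ 0)), 0, trivial, rfl⟩
  rw [ghCode_maioranaMcFarland, kerDim_image codewordMap_injective hne,
    codeKernel_preimage Prod.snd_surjective, finrank_comap_snd, Module.finrank_prod,
    Module.finrank_self, Module.finrank_fintype_fun_eq_card, add_comm 1]

lemma rankC_ghCode_maioranaMcFarland [DecidableEq m] [Finite F]
    (hγ : ∀ i, γ (Pi.single i 1) = 0) :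
    rankC (ghCode (maioranaMcFarland fun u => extendOffFrame F n (γ u))) =
      Fintype.card n + 1 +
        (Fintype.card m + Module.finrank F (Submodule.span F (Set.range γ))) := by
  have hspan : Submodule.span F (LinearMap.snd F (F × (n → F)) _ ⁻¹' Set.univ.graphOn γ) =
      (Submodule.span F (Set.univ.graphOn γ)).comap (LinearMap.snd F (F × (n → F)) _) :=
    Submodule.span_preimage_eq ⟨_, 0, trivial, rfl⟩ fun p _ => ⟨(0, p), rfl⟩
  have hbasis (i : m) : γ (Pi.basisFun F m i) = 0 := by rw [Pi.basisFun_apply, hγ]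
  rw [ghCode_maioranaMcFarland, rankC_image codewordMap_injective, hspan, finrank_comap_snd,
    span_graphOn_univ (Pi.basisFun F m) hbasis, finrank_comap_snd, Module.finrank_prod,
    Module.finrank_self, Module.finrank_fintype_fun_eq_card, Module.finrank_fintype_fun_eq_card,
    add_comm 1]

end MaioranaMcFarland

section Existence

lemma exists_linearIndepOn_of_ncard_le_finrank {F V ι : Type*} [Field F] [AddCommGroup V]
    [Module F V] {T : Set ι} [Finite T] (hT : T.ncard ≤ Module.finrank F V) :
    ∃ w : ι → V, LinearIndepOn F w T := by
  obtain ⟨v, hv⟩ := exists_linearIndependent_of_le_finrank hT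
  refine ⟨Function.extend Subtype.val (v ∘ Finite.equivFin T) 0, ?_⟩
  simpa only [LinearIndepOn, Subtype.val_injective.extend_apply] using
    hv.comp _ (Finite.equivFin T).injective

lemma codeKernel_graphOn_indicator {F V W : Type*} [Field F] [Nontrivial Fˣ] [AddCommGroup V]
    [Module F V] [AddCommGroup W] [Module F W] {T : Set V} (hT : T.Nonempty) (h0 : (0 : V) ∉ T)
    {w : V → W} (hw : LinearIndepOn F w T) :
    codeKernel F (Set.univ.graphOn (T.indicator w)) = ⊥ := by
  set γ := T.indicator w
  have γ_of_mem {u : V} (hu : u ∈ T) : γ u = w u := Set.indicator_of_mem hu w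
  have mem_of_γ_ne {u : V} (hu : γ u ≠ 0) : u ∈ T := Set.mem_of_indicator_ne_zero hu
  have w_ne {u : V} (hu : u ∈ T) : w u ≠ 0 := hw.ne_zero hu
  rw [eq_bot_iff]
  rintro ⟨u, z⟩ hx
  have γ_smul_add (α : F) (c : V) : γ (α • u + c) = α • z + γ c := by
    simpa using hx α (c, γ c) ⟨c, trivial, rfl⟩
  have γ_smul (α : F) : γ (α • u) = α • z := by
    simpa [show γ 0 = 0 from Set.indicator_of_notMem h0 w] using γ_smul_add α 0
  obtain rfl : z = γ u := by simpa using (γ_smul 1).symm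
  have hu : u = 0 := by
    by_cases huT : u ∈ T
    · obtain ⟨l, hl⟩ := exists_ne (1 : Fˣ)
      have hγl : γ ((l : F) • u) = (l : F) • w u := by rw [γ_smul, γ_of_mem huT]
      have hluT : (l : F) • u ∈ T :=
        mem_of_γ_ne (hγl ▸ smul_ne_zero l.ne_zero (w_ne huT))
      have hne : u ≠ (l : F) • u := fun h =>
        hl (Units.ext (smul_left_injective F (fun h0' => h0 (h0' ▸ huT))
          (h.symm.trans (one_smul F u).symm)))
      rw [γ_of_mem hluT] at hγl
      exact absurd hγl.symm ((linearIndepOn_pair_iff w hne (w_ne huT)).1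
        (hw.mono (Set.pair_subset huT hluT)) l)
    · obtain ⟨t, ht⟩ := hT
      have hγt : γ (u + t) = w t := by
        simpa [γ_of_mem ht, show γ u = 0 from Set.indicator_of_notMem huT w] using γ_smul_add 1 t
      have hut : u + t ∈ T := mem_of_γ_ne (hγt ▸ w_ne ht)
      rw [γ_of_mem hut] at hγt
      simpa using hw.injOn hut ht hγt
  rw [Submodule.mem_bot, hu]
  exact congrArg (Prod.mk 0) (Set.indicator_of_notMem h0 w)

lemma exists_maioranaMcFarland_kerDim_rankC {F m n : Type*} [Field F] [Fintype m] [Fintype n]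
    (hq : 2 < Nat.card F) {s : ℕ} (hs : 0 < s)
    (hsm : s ≤ Nat.card F ^ Fintype.card m - (Fintype.card m + 1))
    (hsn : s ≤ Nat.card F ^ Fintype.card n - (Fintype.card n + 1)) :
    ∃ g : (m → F) → (n → F) → F, g 0 = 0 ∧ (∀ u, g u 0 = 0) ∧
      kerDim (ghCode (maioranaMcFarland g)) = Fintype.card n + 1 ∧
      rankC (ghCode (maioranaMcFarland g)) = Fintype.card m + Fintype.card n + 1 + s := by
  classical
  have : Finite F := Nat.finite_of_card_ne_zero (by omega)
  have : Nontrivial Fˣ := Finite.one_lt_card_iff_nontrivial.1 (by rw [Nat.card_units]; omega)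
  rw [← ncard_compl_affineFrame] at hsm hsn
  obtain ⟨T, hTframe, rfl⟩ := Set.exists_subset_card_eq hsm
  have hfinrank : Module.finrank F (↥(affineFrame F n)ᶜ → F) = (affineFrame F n)ᶜ.ncard := by
    have := Fintype.ofFinite ↥(affineFrame F n)ᶜ
    rw [Module.finrank_fintype_fun_eq_card, Set.fintypeCard_eq_ncard]
  obtain ⟨w, hw⟩ := exists_linearIndepOn_of_ncard_le_finrank (hsn.trans_eq hfinrank.symm)
  have w_of_mem_affineFrame {u : m → F} (hu : u ∈ affineFrame F m) : T.indicator w u = 0 :=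
    Set.indicator_of_notMem (fun huT => hTframe huT hu) w
  have hzero : (0 : m → F) ∉ T := fun h => hTframe h zero_mem_affineFrame
  refine ⟨fun u => extendOffFrame F n (T.indicator w u),
    (congrArg _ (w_of_mem_affineFrame zero_mem_affineFrame)).trans (map_zero _),
    fun u => extendOffFrame_of_mem _ zero_mem_affineFrame, ?_, ?_⟩
  · rw [kerDim_ghCode_maioranaMcFarland,
      codeKernel_graphOn_indicator (Set.nonempty_of_ncard_ne_zero hs.ne') hzero hw, finrank_bot,
      add_zero]
  · rw [rankC_ghCode_maioranaMcFarland fun i => w_of_mem_affineFrame (single_mem_affineFrame i),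
      span_range_indicator, finrank_span_image_eq_ncard hw]
    ring

lemma exists_isGH_kerDim_rankC {F : Type*} [Field F] [Fintype F] [DecidableEq F]
    (hq : 2 < Nat.card F) {m a s : ℕ} (hs : 0 < s) (hsm : s ≤ Nat.card F ^ m - (m + 1))
    (hsa : s ≤ Nat.card F ^ a - (a + 1)) :
    ∃ H : Matrix (Fin (Nat.card F ^ (m + a))) (Fin (Nat.card F ^ (m + a))) F,
      IsGH (Nat.card F ^ (m + a - 1)) H ∧ Normalized H ∧
        kerDim (ghCode H) = a + 1 ∧ rankC (ghCode H) = m + a + 1 + s := by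
  obtain ⟨g, hg0, hg0', hker, hrank⟩ :=
    exists_maioranaMcFarland_kerDim_rankC (m := Fin m) (n := Fin a) hq hs (by simpa using hsm)
      (by simpa using hsa)
  have hcard : Nat.card ((Fin m → F) × (Fin a → F)) = Nat.card F ^ (m + a) := by
    simp [pow_add]
  have hm : m ≠ 0 := by
    rintro rfl
    rw [pow_zero] at hsm
    omega
  obtain ⟨e, he⟩ := exists_fin_equiv_eq hcard 0
  have hgh : IsGH (Nat.card F ^ (m + a - 1)) (maioranaMcFarland g) :=
    isGH_maioranaMcFarland g (by rw [hcard, mul_pow_sub_one (by omega)])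
  refine ⟨(maioranaMcFarland g).submatrix e e, hgh.submatrix e, normalized_submatrix
    (fun z => ?_) (fun p => ?_) he, ?_, ?_⟩
  · simp [maioranaMcFarland, hg0]
  · simp [maioranaMcFarland, hg0']
  · rw [kerDim_ghCode_submatrix, hker, Fintype.card_fin]
  · rw [rankC_ghCode_submatrix, hrank, Fintype.card_fin, Fintype.card_fin]

lemma pow_sub_succ_le_pow_sub_succ {q m a : ℕ} (hq : 2 ≤ q) (hma : m ≤ a) :
    q ^ m - (m + 1) ≤ q ^ a - (a + 1) := by
  refine monotone_nat_of_le_succ (f := fun a => q ^ a - (a + 1)) (fun b => ?_) hma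
  have hdouble : q ^ b * 2 ≤ q ^ (b + 1) := Nat.mul_le_mul_left _ hq
  have hpos : 0 < q ^ b := pow_pos (by omega) b
  omega

end Existence

theorem stmt19 {q h k r : ℕ} {F : Type*} [Field F] [Fintype F] [DecidableEq F]
    (hcard : Fintype.card F = q) (hq : 2 < q) (hh : 2 ≤ h)
    (hk1 : (h + 3) / 2 ≤ k) (hk2 : k ≤ h) :
    (∃ H : Matrix (Fin (q ^ h)) (Fin (q ^ h)) F,
        IsGH (q ^ (h - 1)) H ∧ Normalized H ∧
        kerDim (ghCode H) = k ∧ rankC (ghCode H) = r) ↔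
      h + 2 ≤ r ∧ r ≤ k + q ^ (h + 1 - k) - 1 := by
  rw [← Nat.card_eq_fintype_card] at hcard
  subst hcard
  have hpos (n : ℕ) : 0 < Nat.card F ^ n := pow_pos Nat.card_pos n
  constructor
  · rintro ⟨H, hGH, hN, rfl, rfl⟩
    have : NeZero (Nat.card F ^ h) := ⟨(hpos h).ne'⟩
    exact ⟨hGH.add_two_le_rankC (hpos _) (Nat.card_fin _) (by omega),
      hGH.rankC_le (hpos _) (Nat.card_fin _) hN.zero_mem_ghCode⟩
  · rintro ⟨hr1, hr2⟩
    obtain ⟨a, rfl⟩ : ∃ a, k = a + 1 := Nat.exists_eq_add_one.2 (by omega)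
    obtain ⟨m, rfl⟩ : ∃ m, h = m + a := Nat.exists_eq_add_of_le' (by omega)
    rw [Nat.add_assoc m, Nat.add_sub_cancel] at hr2
    have hsm : r - (m + a + 1) ≤ Nat.card F ^ m - (m + 1) := by
      have := hpos m
      omega
    have hsa := hsm.trans (pow_sub_succ_le_pow_sub_succ hq.le (show m ≤ a by omega))
    obtain ⟨H, hGH, hN, hker, hrank⟩ :=
      exists_isGH_kerDim_rankC hq (Nat.sub_pos_of_lt hr1) hsm hsa
    exact ⟨H, hGH, hN, hker, by omega⟩
end
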